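/- For every finite tree T and every integer k ≥ 1, the Cartesian product graph T□K_k has a loose tree-decomposition of width k. -/

import Mathlib

/-!
Root `T` at `r` and let `p` be the parent map, with the convention `p r = r`. Each edge from `v` to
`p v` is replaced by a path with nodes `(v, 0), …, (v, k)` along which the layer `{p v} × [k]` is
exchanged for the layer `{v} × [k]` one vertex at a time: the bag at `(v, i)` contains `(v, j)` for
`j < i` and `(p v, j)` for `j ≥ i`. The node `(v, 0)` is attached to `(p v, k)`, whose bag is the
same. At the root this gives a path of `k + 1` identical bags, which provides a tree-edge even when
`T` has a single vertex.

All bags have `k` elements. Consecutive bags differ in at most one vertex on each side, and a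
marginal edge must join these two vertices (`marginalEdges_subsingleton`). The trace of `(v, j)`
consists of nodes on the path of `v` and on initial segments of the paths of the children of `v`,
all of which lead to `(v, k)` inside the trace. Both `T` and the new tree are described by parent
maps (`IsTree.exists_parent`, `parentGraph_isTree`).
-/

open SimpleGraph

/-- A set of vertices is connected in `G` if the induced subgraph is connected. -/
def ConnectedIn {α : Type} (G : SimpleGraph α) (s : Set α) : Prop :=
  (G.induce s).Connected

/-- `H` is a minor of `G`: there is a minor model of `H` in `G`. -/
def IsMinor {W V : Type} (H : SimpleGraph W) (G : SimpleGraph V) : Prop :=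
  ∃ ρ : W → Set V,
    (∀ x, (ρ x).Nonempty) ∧
    (∀ x, ConnectedIn G (ρ x)) ∧
    (∀ x y, x ≠ y → Disjoint (ρ x) (ρ y)) ∧
    (∀ x y, H.Adj x y → ∃ a ∈ ρ x, ∃ b ∈ ρ y, G.Adj a b)

/-- Cartesian tree product number: least `k ≥ 1` such that `G` is a minor
of `T □ K_k` for some finite tree `T`. -/
noncomputable def ctp {V : Type} (G : SimpleGraph V) : ℕ :=
  sInf {k | 1 ≤ k ∧ ∃ (τ : Type) (T : SimpleGraph τ), Finite τ ∧ T.IsTree ∧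
    IsMinor G (T.boxProd (⊤ : SimpleGraph (Fin k)))}

/-- Edges of `G[A ∪ B]` that are edges of neither `G[A]` nor `G[B]` (marginal edges). -/
def marginalEdges {V : Type} (G : SimpleGraph V) (A B : Set V) : Set (Sym2 V) :=
  {e | ∃ x y, e = s(x, y) ∧ G.Adj x y ∧ (x ∈ A ∪ B) ∧ (y ∈ A ∪ B) ∧
    ¬(x ∈ A ∧ y ∈ A) ∧ ¬(x ∈ B ∧ y ∈ B)}

/-- `(T, χ)` is a loose tree-decomposition of `G`. -/
def IsLTD {V τ : Type} (G : SimpleGraph V) (T : SimpleGraph τ) (χ : τ → Set V) : Prop :=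
  Finite τ ∧ T.IsTree ∧
  (∀ x : V, {t | x ∈ χ t}.Nonempty ∧ ConnectedIn T {t | x ∈ χ t}) ∧
  (∀ x y : V, G.Adj x y → ∃ t1 t2 : τ, T.Adj t1 t2 ∧ x ∈ χ t1 ∪ χ t2 ∧ y ∈ χ t1 ∪ χ t2) ∧
  (∀ t1 t2 : τ, T.Adj t1 t2 → (marginalEdges G (χ t1) (χ t2)).Subsingleton)

/-- The width of a loose tree-decomposition: the maximum size of a bag. -/
noncomputable def ltdWidth {V τ : Type} (χ : τ → Set V) : ℕ :=
  sSup (Set.range fun t => (χ t).ncard)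

/-- A full loose tree-decomposition of width `k`. -/
def IsFullLTD {V τ : Type} (G : SimpleGraph V) (T : SimpleGraph τ) (χ : τ → Set V)
    (k : ℕ) : Prop :=
  IsLTD G T χ ∧ (∀ t, (χ t).ncard = k) ∧
  ∀ t t', T.Adj t t' → ∃ x x', x ∈ χ t \ χ t' ∧ x' ∈ χ t' \ χ t ∧
    symmDiff (χ t) (χ t') = {x, x'}

/-- Number of connected components of a graph. -/
noncomputable def numComponents {α : Type} (G : SimpleGraph α) : ℕ :=
  Nat.card G.ConnectedComponent

/-- `S` is a separator of `G`: `G - S` has strictly more connected components than `G`. -/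
def IsSeparator {V : Type} (G : SimpleGraph V) (S : Set V) : Prop :=
  numComponents G < numComponents (G.induce (Sᶜ))

/-- Two vertex sets are (tightly) touching. -/
def Touching {V : Type} (G : SimpleGraph V) (S1 S2 : Set V) : Prop :=
  (S1 ∩ S2).Nonempty ∨
  ∃ x1 x2 y1 y2, G.Adj x1 x2 ∧ G.Adj y1 y2 ∧ s(x1, x2) ≠ s(y1, y2) ∧
    x1 ∈ S1 ∧ y1 ∈ S1 ∧ x2 ∈ S2 ∧ y2 ∈ S2

/-- A tight bramble of `G`. -/
def TightBramble {V : Type} (G : SimpleGraph V) (B : Set (Set V)) : Prop :=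
  (∀ S ∈ B, ConnectedIn G S) ∧ (∀ S ∈ B, 2 ≤ S.ncard) ∧ B.Pairwise (Touching G)

/-- `S` is a cover of the family `B`. -/
def IsCover {V : Type} (B : Set (Set V)) (S : Set V) : Prop :=
  ∀ B0 ∈ B, (S ∩ B0).Nonempty

/-- The order of a family `B`: the minimum size of a cover of `B`. -/
noncomputable def brambleOrder {V : Type} (B : Set (Set V)) : ℕ :=
  sInf {n | ∃ S : Set V, IsCover B S ∧ S.ncard = n}

/-! ### Parent graphs and rooted trees -/

/-- The graph joining every `x` to its parent `f x`; a fixed point of `f` has no parent. -/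
def parentGraph {α : Type} (f : α → α) : SimpleGraph α :=
  SimpleGraph.fromRel fun x y => y = f x

lemma parentGraph_adj {α : Type} {f : α → α} {x y : α} :
    (parentGraph f).Adj x y ↔ x ≠ y ∧ (y = f x ∨ x = f y) := by
  simp [parentGraph]

lemma connected_of_descent {α : Type} (G : SimpleGraph α) (a : α) (m : α → ℕ)
    (h : ∀ x, x ≠ a → ∃ y, G.Adj x y ∧ m y < m x) : G.Connected := by
  have key : ∀ n x, m x = n → G.Reachable x a := by
    intro n
    induction n using Nat.strong_induction_on with
    | _ n ih =>
      intro x hx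
      by_cases hxa : x = a
      · subst hxa; exact Reachable.refl _
      · obtain ⟨y, hy, hlt⟩ := h x hxa
        exact hy.reachable.trans (ih (m y) (hx ▸ hlt) y rfl)
  have : Nonempty α := ⟨a⟩
  exact ⟨fun x y => (key _ x rfl).trans (key _ y rfl).symm⟩

lemma connectedIn_of_descent {α : Type} (G : SimpleGraph α) (S : Set α) (a : α) (ha : a ∈ S)
    (m : α → ℕ) (h : ∀ x ∈ S, x ≠ a → ∃ y ∈ S, G.Adj x y ∧ m y < m x) : ConnectedIn G S := by
  refine connected_of_descent _ ⟨a, ha⟩ (fun x => m x) ?_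
  rintro ⟨x, hx⟩ hxa
  obtain ⟨y, hyS, hy, hlt⟩ := h x hx (by simpa using hxa)
  exact ⟨⟨y, hyS⟩, hy, hlt⟩

lemma parentGraph_connected {α : Type} (f : α → α) (r : α) (d : α → ℕ)
    (h : ∀ x, x ≠ r → d (f x) < d x) : (parentGraph f).Connected := by
  refine connected_of_descent _ r d fun x hx => ⟨f x, ?_, h x hx⟩
  refine parentGraph_adj.2 ⟨fun he => ?_, Or.inl rfl⟩
  have := h x hx
  rw [← he] at this
  exact lt_irrefl _ this

/-- A finite parent graph is connected and has at most one edge for every non-root vertex, so it is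
a tree by counting edges. -/
lemma parentGraph_isTree {α : Type} [Finite α] (f : α → α) (r : α) (hr : f r = r) (d : α → ℕ)
    (h : ∀ x, x ≠ r → d (f x) < d x) : (parentGraph f).IsTree := by
  have hc := parentGraph_connected f r d h
  refine isTree_iff_connected_and_card.2 ⟨hc, le_antisymm ?_ hc.card_vert_le_card_edgeSet_add_one⟩
  have hsub : (parentGraph f).edgeSet ⊆ (fun x => s(x, f x)) '' ({r}ᶜ : Set α) := by
    intro e
    induction e with
    | _ x y =>
      intro he
      obtain ⟨hne, h⟩ := parentGraph_adj.1 he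
      dsimp only at h hne
      obtain rfl | rfl := h
      · exact ⟨x, fun hx => hne (by rw [Set.mem_singleton_iff.1 hx, hr]), rfl⟩
      · exact ⟨y, fun hy => hne (by rw [Set.mem_singleton_iff.1 hy, hr]), Sym2.eq_swap⟩
  have h1 := Set.ncard_le_ncard hsub (Set.toFinite _)
  have h2 := Set.ncard_image_le (f := fun x => s(x, f x)) (Set.toFinite ({r}ᶜ : Set α))
  have h3 := Set.ncard_add_ncard_compl ({r} : Set α)
  rw [Set.ncard_singleton] at h3
  rw [Nat.card_coe_set_eq]
  omega

/-- A tree rooted at `r` is the parent graph of the map sending a vertex to a neighbour closer to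
the root: that graph is a connected spanning subgraph, and trees are minimally connected. -/
lemma IsTree.exists_parent {α : Type} (T : SimpleGraph α) (hT : T.IsTree) (r : α) :
    ∃ (p : α → α) (d : α → ℕ), p r = r ∧ (∀ x, x ≠ r → d (p x) < d x) ∧ T = parentGraph p := by
  have hex : ∀ v, ∃ u, (v = r → u = r) ∧ (v ≠ r → T.Adj v u ∧ T.dist u r < T.dist v r) := by
    intro v
    by_cases hv : v = r
    · exact ⟨r, fun _ => rfl, fun h => absurd hv h⟩
    · obtain ⟨w, hw⟩ := hT.connected.exists_walk_length_eq_dist v r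
      cases w with
      | nil => exact absurd rfl hv
      | @cons _ u _ hadj q =>
        refine ⟨u, fun h => absurd h hv, fun _ => ⟨hadj, ?_⟩⟩
        have := dist_le q
        rw [Walk.length_cons] at hw
        omega
  choose p hp1 hp2 using hex
  have hd : ∀ x, x ≠ r → T.dist (p x) r < T.dist x r := fun x hx => (hp2 x hx).2
  refine ⟨p, fun v => T.dist v r, hp1 r rfl, hd, ?_⟩
  have hle : parentGraph p ≤ T := by
    intro x y hxy
    obtain ⟨hne, rfl | rfl⟩ := parentGraph_adj.1 hxy
    · exact (hp2 x fun hx => hne (by rw [hx, hp1 r rfl])).1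
    · exact (hp2 y fun hy => hne (by rw [hy, hp1 r rfl])).1.symm
  exact le_antisymm
    ((isTree_iff_minimal_connected.1 hT).2
      (parentGraph_connected p r (fun v => T.dist v r) hd) hle) hle

/-! ### Marginal edges -/

lemma marginalEdges_subsingleton {V : Type} (G : SimpleGraph V) {A B : Set V} {a b : V}
    (hA : ∀ x ∈ A, x ∉ B → x = a) (hB : ∀ x ∈ B, x ∉ A → x = b) :
    (marginalEdges G A B).Subsingleton := by
  have key : ∀ e ∈ marginalEdges G A B, e = s(a, b) := by
    rintro e ⟨x, y, rfl, -, hx, hy, hnA, hnB⟩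
    rcases hx with hx | hx <;> rcases hy with hy | hy
    · exact absurd ⟨hx, hy⟩ hnA
    · rw [hA x hx fun h => hnB ⟨h, hy⟩, hB y hy fun h => hnA ⟨hx, h⟩]
    · rw [hB x hx fun h => hnA ⟨h, hy⟩, hA y hy fun h => hnB ⟨hx, h⟩, Sym2.eq_swap]
    · exact absurd ⟨hx, hy⟩ hnB
  intro e he e' he'
  rw [key e he, key e' he']

lemma marginalEdges_comm {V : Type} (G : SimpleGraph V) (A B : Set V) :
    marginalEdges G A B = marginalEdges G B A := by
  ext e
  simp only [marginalEdges, Set.mem_ofPred_eq, Set.union_comm A B]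
  grind

/-! ### The decomposition obtained by subdividing a rooted tree -/

open Classical in
/-- The parent map of the subdivided tree: inside the path of `v` it lowers the index by one, and
the initial node `(v, 0)` is sent to the last node of the path of `p v`. The root is `(r, 0)`. -/
noncomputable def pathParent {σ : Type} (r : σ) (p : σ → σ) (k : ℕ) (t : σ × Fin (k + 1)) :
    σ × Fin (k + 1) :=
  Fin.cases (if t.1 = r then (r, 0) else (p t.1, Fin.last k)) (fun i => (t.1, i.castSucc)) t.2

/-- The bag at `(v, i)`: the vertices `(v, j)` with `j < i` and `(p v, j)` with `j ≥ i`. -/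
def pathBag {σ : Type} (p : σ → σ) (k : ℕ) (t : σ × Fin (k + 1)) : Set (σ × Fin k) :=
  Set.range fun j : Fin k => (if j.val < t.2.val then t.1 else p t.1, j)

section PathTree

variable {σ : Type} {r : σ} {p : σ → σ} {k : ℕ}

lemma mem_pathBag {t : σ × Fin (k + 1)} {w : σ} {j : Fin k} :
    (w, j) ∈ pathBag p k t ↔ w = if j.val < t.2.val then t.1 else p t.1 := by
  simp only [pathBag, Set.mem_range, Prod.mk.injEq]
  constructor
  · rintro ⟨j', h, rfl⟩; exact h.symm
  · intro h; exact ⟨j, h.symm, rfl⟩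

lemma ncard_pathBag (t : σ × Fin (k + 1)) : (pathBag p k t).ncard = k := by
  have hinj : Function.Injective
      fun j : Fin k => (if j.val < t.2.val then t.1 else p t.1, j) :=
    fun a b h => (Prod.mk.inj h).2
  rw [pathBag, ← Set.image_univ, Set.ncard_image_of_injective _ hinj, Set.ncard_univ, Nat.card_fin]

lemma pathParent_succ (v : σ) (i : Fin k) :
    pathParent r p k (v, i.succ) = (v, i.castSucc) := rfl

lemma pathParent_zero_of_ne {v : σ} (hv : v ≠ r) :
    pathParent r p k (v, 0) = (p v, Fin.last k) := by
  simp [pathParent, hv]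

lemma pathParent_root : pathParent r p k (r, 0) = (r, 0) := by
  simp [pathParent]

lemma pathTree_adj_succ (v : σ) (i : Fin k) :
    (parentGraph (pathParent r p k)).Adj (v, i.castSucc) (v, i.succ) := by
  refine parentGraph_adj.2 ⟨fun h => ?_, Or.inr (pathParent_succ v i).symm⟩
  exact (Fin.castSucc_lt_succ (i := i)).ne (Prod.mk.inj h).2

lemma pathTree_adj_zero {v : σ} (hv : v ≠ r) (hpv : p v ≠ v) :
    (parentGraph (pathParent r p k)).Adj (v, 0) (p v, Fin.last k) :=
  parentGraph_adj.2 ⟨fun h => hpv (Prod.mk.inj h).1.symm,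
    Or.inl (pathParent_zero_of_ne hv).symm⟩

lemma pathTree_isTree [Finite σ] (d : σ → ℕ) (h : ∀ x, x ≠ r → d (p x) < d x) :
    (parentGraph (pathParent r p k)).IsTree := by
  -- lexicographic rank: depth of `v` first, then position on its path
  refine parentGraph_isTree _ (r, 0) pathParent_root (fun t => d t.1 * (k + 1) + t.2.val) ?_
  rintro ⟨v, i⟩ hne
  induction i using Fin.cases with
  | zero =>
    have hv : v ≠ r := fun hv => hne (by rw [hv])
    rw [pathParent_zero_of_ne hv]
    have := Nat.mul_le_mul_right (k + 1) (Nat.succ_le_of_lt (h v hv))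
    simp only [Nat.succ_mul] at this
    simp only [Fin.val_last, Fin.val_zero]
    omega
  | succ i =>
    rw [pathParent_succ]
    simp

lemma marginalEdges_pathParent (G : SimpleGraph (σ × Fin k)) (t : σ × Fin (k + 1)) :
    (marginalEdges G (pathBag p k t) (pathBag p k (pathParent r p k t))).Subsingleton := by
  -- two equal bags have no marginal edge
  have heq : ∀ A B : Set (σ × Fin k), A = B → (marginalEdges G A B).Subsingleton := by
    rintro A B rfl e ⟨x, y, -, -, hx, hy, hn, -⟩
    rw [Set.union_self] at hx hy
    exact absurd ⟨hx, hy⟩ hn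
  obtain ⟨v, i⟩ := t
  induction i using Fin.cases with
  | zero =>
    apply heq
    by_cases hv : v = r
    · rw [hv, pathParent_root]
    · rw [pathParent_zero_of_ne hv]
      ext ⟨w, j⟩
      simp [mem_pathBag]
  | succ i =>
    rw [pathParent_succ]
    apply marginalEdges_subsingleton G (a := (v, i)) (b := (p v, i))
    all_goals
      rintro ⟨w, j⟩
      simp only [mem_pathBag, Fin.val_succ, Fin.val_castSucc, Prod.mk.injEq, Fin.ext_iff]
      grind

lemma pathBag_trace (hr : p r = r) (hne : ∀ x, x ≠ r → p x ≠ x) (v : σ) (j : Fin k) :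
    ConnectedIn (parentGraph (pathParent r p k)) {t | (v, j) ∈ pathBag p k t} := by
  classical
  -- inside the trace, the path of `v` is climbed and the paths of its children are descended
  refine connectedIn_of_descent _ _ (v, Fin.last k) (by simp [mem_pathBag])
    (fun t => if t.1 = v then k - t.2.val else k + 1 + t.2.val) ?_
  rintro ⟨u, i⟩ hmem hlast
  simp only [Set.mem_ofPred_eq, mem_pathBag] at hmem
  by_cases huv : u = v
  · subst huv
    induction i using Fin.lastCases with
    | last => exact absurd rfl hlast
    | cast i =>
      refine ⟨(u, i.succ), ?_, pathTree_adj_succ u i, ?_⟩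
      · simp only [Set.mem_ofPred_eq, mem_pathBag, Fin.val_succ]
        simp only [Fin.val_castSucc] at hmem
        grind
      · have := i.isLt
        simp only [if_true, Fin.val_succ, Fin.val_castSucc]
        omega
  · have hij : ¬ j.val < i.val := fun h => huv (by rw [if_pos h] at hmem; exact hmem.symm)
    rw [if_neg hij] at hmem
    induction i using Fin.cases with
    | zero =>
      have hur : u ≠ r := fun h => huv (by rw [hmem, h, hr])
      refine ⟨(v, Fin.last k), by simp [mem_pathBag], ?_, ?_⟩
      · rw [hmem]
        exact pathTree_adj_zero hur (hne u hur)
      · simp [huv]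
    | succ i =>
      refine ⟨(u, i.castSucc), ?_, (pathTree_adj_succ u i).symm, ?_⟩
      · simp only [Fin.val_succ] at hij
        simp only [Set.mem_ofPred_eq, mem_pathBag, Fin.val_castSucc]
        rw [if_neg (by omega)]
        exact hmem
      · simp [huv]

end PathTree

/-! ### Loose tree-decomposition of the product -/

/-- For every finite tree `T` and every `k ≥ 1`, the Cartesian product
`T □ K_k` has a loose tree-decomposition of width `k`. -/
theorem boxProd_ltd {σ : Type} [Fintype σ] (T : SimpleGraph σ) (hT : T.IsTree)
    (k : ℕ) (hk : 1 ≤ k) :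
    ∃ (τ : Type) (T' : SimpleGraph τ) (χ : τ → Set (σ × Fin k)),
      IsLTD (T.boxProd (⊤ : SimpleGraph (Fin k))) T' χ ∧ ltdWidth χ = k := by
  obtain ⟨r⟩ := hT.connected.nonempty
  obtain ⟨p, d, hr, hd, rfl⟩ := IsTree.exists_parent T hT r
  have hne : ∀ x, x ≠ r → p x ≠ x := fun x hx h => by
    have := hd x hx
    rw [h] at this
    exact lt_irrefl _ this
  refine ⟨σ × Fin (k + 1), parentGraph (pathParent r p k), pathBag p k,
    ⟨inferInstance, pathTree_isTree d hd, ?_, ?_, ?_⟩, ?_⟩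
  · rintro ⟨v, j⟩
    exact ⟨⟨(v, Fin.last k), by simp [mem_pathBag]⟩, pathBag_trace hr hne v j⟩
  · -- the edge between `(v, j)` and `(p v, j)` is covered where `(p v, j)` is exchanged for `(v, j)`
    have hpar : ∀ (v : σ) (j : Fin k),
        (v, j) ∈ pathBag p k (v, j.castSucc) ∪ pathBag p k (v, j.succ) ∧
        (p v, j) ∈ pathBag p k (v, j.castSucc) ∪ pathBag p k (v, j.succ) := fun v j =>
      ⟨Or.inr (by simp [mem_pathBag]), Or.inl (by simp [mem_pathBag])⟩
    rintro ⟨v, i⟩ ⟨w, j⟩ hadj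
    rcases boxProd_adj.1 hadj with ⟨h, hij⟩ | ⟨-, hvw⟩
    · simp only at h hij
      subst hij
      obtain ⟨-, rfl | rfl⟩ := parentGraph_adj.1 h
      · exact ⟨_, _, pathTree_adj_succ v i, hpar v i⟩
      · exact ⟨_, _, pathTree_adj_succ w i, (hpar w i).symm⟩
    · simp only at hvw
      subst hvw
      -- both endpoints lie in the last bag of the path of `v`, which has a tree-edge as `k ≥ 1`
      obtain ⟨m, rfl⟩ := Nat.exists_eq_add_of_le' hk
      exact ⟨_, _, pathTree_adj_succ v (Fin.last m), Or.inr (by simp [mem_pathBag]; omega),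
        Or.inr (by simp [mem_pathBag]; omega)⟩
  · intro t1 t2 h
    obtain ⟨-, rfl | rfl⟩ := parentGraph_adj.1 h
    · exact marginalEdges_pathParent _ _
    · rw [marginalEdges_comm]
      exact marginalEdges_pathParent _ _
  · have : Nonempty (σ × Fin (k + 1)) := ⟨(r, 0)⟩
    simp [ltdWidth, ncard_pathBag]
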